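/- Let R be a poset function on a nonempty finite set V, let G_R be its underlying digraph, and let A_{G_R} be the all-paths transit function of G_R. Then G_R is a directed acyclic graph (it contains no directed cycle) and R = A_{G_R}, i.e., for all u,v ∈ V, R(u,v) is exactly the set of vertices lying on some directed path from u to v in G_R. -/

import Mathlib

/-- A directed path from `u` to `v` w.r.t. the edge relation `E`: a nonempty list of
pairwise distinct vertices starting at `u`, ending at `v`, with every consecutive pair
an edge. -/
def IsDiPath {V : Type*} (E : V → V → Prop) (u v : V) (p : List V) : Prop :=
  p.Chain' E ∧ p.Nodup ∧ p.head? = some u ∧ p.getLast? = some v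

/-- The edge relation of the underlying digraph `G_R` of `R`. -/
def underlyingEdge {V : Type*} (R : V → V → Set V) (x y : V) : Prop :=
  x ≠ y ∧ R x y = {x, y}

/-- The all-paths transit function of the digraph with edge relation `E`. -/
def allPaths {V : Type*} (E : V → V → Prop) (u v : V) : Set V :=
  {x : V | ∃ p : List V, IsDiPath E u v p ∧ x ∈ p}

/-!
The relation `R u v ≠ ∅` is a partial order on `V`, and the axioms say that `R u v` is its interval
`[u, v]`. The edges of the underlying digraph are then exactly the covering pairs. A directed path
climbs strictly in the order, so there is no directed cycle and all vertices of a path from `u` to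
`v` lie in `[u, v]`. Conversely, in a locally finite order every `u ≤ x` is joined by a chain of
covers; concatenating such chains from `u` to `x` and from `x` to `v` yields a path through `x`,
and acyclicity makes its vertices distinct.
-/

section Digraph

open Relation

variable {V : Type*} {E : V → V → Prop} {u v x : V} {p : List V}

theorem IsDiPath.mem_left (hp : IsDiPath E u v p) : u ∈ p :=
  List.mem_of_head? hp.2.2.1

theorem IsDiPath.reflTransGen_of_mem (hp : IsDiPath E u v p) (hx : x ∈ p) :
    ReflTransGen E u x ∧ ReflTransGen E x v := by
  obtain ⟨hchain, -, hhead, hlast⟩ := hp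
  constructor
  · refine hchain.induction (ReflTransGen E u ·) p (fun _ _ hyz huy ↦ huy.tail hyz)
      (fun hne ↦ ?_) x hx
    rw [(List.head_eq_iff_head?_eq_some hne).2 hhead]
  · refine hchain.backwards_induction (ReflTransGen E · v) p (fun _ _ hyz hzv ↦ hzv.head hyz)
      (fun hne ↦ ?_) x hx
    rw [(List.getLast_eq_iff_getLast?_eq_some hne).2 hlast]

theorem IsDiPath.not_edge_of_acyclic (hE : ∀ y, ¬ TransGen E y y) (hp : IsDiPath E u v p) :
    ¬ E v u := fun hvu ↦
  hE v (.head' hvu (hp.reflTransGen_of_mem hp.mem_left).2)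

theorem nodup_of_isChain_of_acyclic (hE : ∀ y, ¬ TransGen E y y) (hp : p.IsChain E) :
    p.Nodup := by
  have hpairwise : p.Pairwise (TransGen E) :=
    List.isChain_iff_pairwise.1 (hp.imp fun _ _ ↦ .single)
  refine hpairwise.imp ?_
  rintro y _ hyy rfl
  exact hE y hyy

theorem exists_isChain_mem_of_reflTransGen (hux : ReflTransGen E u x) (hxv : ReflTransGen E x v) :
    ∃ p : List V, p.IsChain E ∧ p.head? = some u ∧ p.getLast? = some v ∧ x ∈ p := by
  obtain ⟨p, _, hp, hphead, hplast⟩ := List.exists_isChain_ne_nil_of_relationReflTransGen hux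
  obtain ⟨q, hq, hqlast⟩ := List.exists_isChain_cons_of_relationReflTransGen hxv
  obtain ⟨p', rfl⟩ : ∃ p', p = p' ++ [x] :=
    ⟨p.dropLast, by rw [← hplast, List.dropLast_append_getLast]⟩
  refine ⟨p' ++ x :: q, List.isChain_split.2 ⟨hp, hq⟩, ?_, ?_, by simp⟩
  · rw [← hphead]
    cases p' <;> simp
  · rw [List.getLast?_append_cons, List.getLast?_eq_some_getLast (List.cons_ne_nil x q), hqlast]

theorem mem_allPaths_iff_of_acyclic (hE : ∀ y, ¬ TransGen E y y) :
    x ∈ allPaths E u v ↔ ReflTransGen E u x ∧ ReflTransGen E x v := by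
  constructor
  · rintro ⟨p, hp, hx⟩
    exact hp.reflTransGen_of_mem hx
  · rintro ⟨hux, hxv⟩
    obtain ⟨p, hp, hhead, hlast, hx⟩ := exists_isChain_mem_of_reflTransGen hux hxv
    exact ⟨p, ⟨hp, nodup_of_isChain_of_acyclic hE hp, hhead, hlast⟩, hx⟩

end Digraph

section Order

variable {α : Type*}

theorem not_transGen_covBy_self [Preorder α] (a : α) : ¬ Relation.TransGen (· ⋖ ·) a a := by
  have hle : Relation.TransGen (· ⋖ ·) ≤ ((· < ·) : α → α → Prop) :=
    Relation.transGen_minimal fun _ _ ↦ CovBy.lt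
  exact fun h ↦ lt_irrefl a (hle a a h)

theorem underlyingEdge_Icc [PartialOrder α] :
    underlyingEdge (Set.Icc : α → α → Set α) = (· ⋖ ·) := by
  ext a b
  constructor
  · rintro ⟨hne, hIcc⟩
    have hle : a ≤ b := Set.nonempty_Icc.1 (hIcc ▸ Set.insert_nonempty a {b})
    refine ⟨hle.lt_of_ne hne, fun c hac hcb ↦ ?_⟩
    have hc : c ∈ ({a, b} : Set α) := hIcc ▸ ⟨hac.le, hcb.le⟩
    exact hc.elim hac.ne' hcb.ne
  · exact fun h ↦ ⟨h.ne, h.Icc_eq⟩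

theorem Icc_eq_allPaths_covBy [PartialOrder α] [LocallyFiniteOrder α] (a b : α) :
    Set.Icc a b = allPaths (· ⋖ ·) a b := by
  ext x
  rw [mem_allPaths_iff_of_acyclic not_transGen_covBy_self, Set.mem_Icc,
    le_iff_reflTransGen_covBy, le_iff_reflTransGen_covBy]

end Order

/-- A poset function on `V`: a directed transit function (axioms `t0`, `t1`, `t3`) that moreover
satisfies `t2a`, `tr1` and `tr2`, here on an arbitrary, possibly infinite, vertex set. -/
structure IsPosetFunction {V : Type*} (R : V → V → Set V) : Prop where
  t0 : ∀ u v w, R u w ≠ ∅ → R w v ≠ ∅ → R u v ≠ ∅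
  t1 : ∀ u v, R u v ≠ ∅ → u ∈ R u v ∧ v ∈ R u v
  t3 : ∀ u, R u u = {u}
  t2a : ∀ u v, R u v ≠ ∅ → u ≠ v → R v u = ∅
  tr1 : ∀ u v w, u ≠ v → R u w ≠ ∅ → R w v ≠ ∅ → R u w ∪ R w v ⊆ R u v
  tr2 : ∀ u v w, u ≠ v → (R u w = ∅ ∨ R w v = ∅) → w ∉ R u v

namespace IsPosetFunction

variable {V : Type*} {R : V → V → Set V}

theorem self_ne_empty (hR : IsPosetFunction R) (u : V) : R u u ≠ ∅ :=
  hR.t3 u ▸ Set.singleton_ne_empty u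

theorem eq_of_ne_empty (hR : IsPosetFunction R) {u v : V} (huv : R u v ≠ ∅) (hvu : R v u ≠ ∅) :
    u = v :=
  by_contra fun hne ↦ hvu (hR.t2a u v huv hne)

theorem mem_iff (hR : IsPosetFunction R) {u v x : V} : x ∈ R u v ↔ R u x ≠ ∅ ∧ R x v ≠ ∅ := by
  rcases eq_or_ne u v with rfl | huv
  · rw [hR.t3, Set.mem_singleton_iff]
    constructor
    · rintro rfl
      exact ⟨hR.self_ne_empty x, hR.self_ne_empty x⟩
    · rintro ⟨hux, hxu⟩
      exact hR.eq_of_ne_empty hxu hux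
  · constructor
    · exact fun hx ↦ not_or.1 fun hempty ↦ hR.tr2 u v x huv hempty hx
    · rintro ⟨hux, hxv⟩
      exact hR.tr1 u v x huv hux hxv (.inl (hR.t1 u x hux).2)

theorem exists_partialOrder_eq_Icc (hR : IsPosetFunction R) :
    ∃ _ : PartialOrder V, R = Set.Icc := by
  let order : PartialOrder V :=
    { le u v := R u v ≠ ∅
      le_refl := hR.self_ne_empty
      le_trans u w v := hR.t0 u v w
      le_antisymm _ _ := hR.eq_of_ne_empty }
  exact ⟨order, funext₂ fun u v ↦ Set.ext fun x ↦ hR.mem_iff⟩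

end IsPosetFunction

theorem stmt_6_general {V : Type*} {R : V → V → Set V} (hR : IsPosetFunction R)
    (hfin : ∀ u v, (R u v).Finite) :
    (∀ (u v : V) (p : List V),
        IsDiPath (underlyingEdge R) u v p → ¬ underlyingEdge R v u) ∧
    (∀ u v, R u v = allPaths (underlyingEdge R) u v) := by
  obtain ⟨_, rfl⟩ := hR.exists_partialOrder_eq_Icc
  let _ : LocallyFiniteOrder V := .ofFiniteIcc hfin
  rw [underlyingEdge_Icc]
  exact ⟨fun _ _ _ hp ↦ hp.not_edge_of_acyclic not_transGen_covBy_self, Icc_eq_allPaths_covBy⟩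

/-- For a poset function `R`, the underlying digraph `G_R` is a DAG (no
directed cycle, i.e. no directed path from `u` to `v` together with an edge `(v,u)`),
and `R` equals the all-paths transit function of `G_R`. -/
theorem stmt_6 {V : Type*} [Fintype V] [Nonempty V]
    (R : V → V → Set V)
    -- (t0)
    (t0 : ∀ u v w, R u w ≠ ∅ → R w v ≠ ∅ → R u v ≠ ∅)
    -- (t1)
    (t1 : ∀ u v, R u v ≠ ∅ → u ∈ R u v ∧ v ∈ R u v)
    -- (t3)
    (t3 : ∀ u, R u u = {u})
    -- (t2a)
    (t2a : ∀ u v, R u v ≠ ∅ → u ≠ v → R v u = ∅)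
    -- (tr1)
    (tr1 : ∀ u v w, u ≠ v → R u w ≠ ∅ → R w v ≠ ∅ → R u w ∪ R w v ⊆ R u v)
    -- (tr2)
    (tr2 : ∀ u v w, u ≠ v → (R u w = ∅ ∨ R w v = ∅) → w ∉ R u v) :
    -- G_R is acyclic
    (∀ (u v : V) (p : List V),
        IsDiPath (underlyingEdge R) u v p → ¬ underlyingEdge R v u) ∧
    -- R = A_{G_R}
    (∀ u v, R u v = allPaths (underlyingEdge R) u v) := by
  exact stmt_6_general ⟨t0, t1, t3, t2a, tr1, tr2⟩ fun u v ↦ (R u v).toFinite
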